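/- Let G be a topological group, e its identity, and for p ∈ G let Ω_p denote the space of admissible paths from e to p in a step-two Carnot group (paths γ : [0,2π] → G with γ(0)=e, γ(2π)=p, absolutely continuous with L² derivative tangent to the distribution), with the L² topology on controls. Then for any p₁, p₂ ∈ G, the spaces Ω_{p₁} and Ω_{p₂} are homotopy equivalent; moreover Ω_e is contractible, hence every Ω_p is contractible. -/

import Mathlib

open Matrix MeasureTheory Real

open Set Filter Topology unitInterval

open scoped ENNReal

/-!
A point `g` is reached by some path `γ` because the reachable points form a semigroup that contains
the horizontal one-parameter subgroups, hence their commutators, hence the whole second layer.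
With `γ'` a path to `g⁻¹`, the identity of `Ω_g` is homotopic to `u ↦ (u * γ') * γ`: first let every
path arrive early and rest at its endpoint, then let the loop `γ' * γ` grow under the dilations.
But `u * γ'` is itself a loop at the identity, and dilating it down to the constant path contracts
this map to a constant.
-/

section StepTwoGroup

variable {E V : Type*} [NormedAddCommGroup E] [NormedSpace ℝ E] [NormedAddCommGroup V]
  [NormedSpace ℝ V]

/-- The step-two nilpotent Lie group with horizontal layer `E` and vertical layer `V`, in the
coordinates where `(x, z) * (x', z') = (x + x', z + z' + ω x x' / 2)`. Only the antisymmetric part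
of `ω` matters for its isomorphism class; the Carnot groups are those with `ω` alternating. -/
@[ext]
structure StepTwoGroup (ω : E →L[ℝ] E →L[ℝ] V) where
  /-- The coordinate in the first layer. -/
  horizontal : E
  /-- The coordinate in the second layer. -/
  vertical : V

namespace StepTwoGroup

variable {ω : E →L[ℝ] E →L[ℝ] V}

noncomputable instance : Mul (StepTwoGroup ω) where
  mul g h := ⟨g.horizontal + h.horizontal,
    g.vertical + h.vertical + (1 / 2 : ℝ) • ω g.horizontal h.horizontal⟩

instance : One (StepTwoGroup ω) where
  one := ⟨0, 0⟩

noncomputable instance : Inv (StepTwoGroup ω) where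
  inv g := ⟨-g.horizontal, -g.vertical + (1 / 2 : ℝ) • ω g.horizontal g.horizontal⟩

@[simp] lemma mul_horizontal (g h : StepTwoGroup ω) :
    (g * h).horizontal = g.horizontal + h.horizontal := rfl

@[simp] lemma mul_vertical (g h : StepTwoGroup ω) :
    (g * h).vertical = g.vertical + h.vertical + (1 / 2 : ℝ) • ω g.horizontal h.horizontal := rfl

@[simp] lemma one_horizontal : (1 : StepTwoGroup ω).horizontal = 0 := rfl

@[simp] lemma one_vertical : (1 : StepTwoGroup ω).vertical = 0 := rfl

@[simp] lemma inv_horizontal (g : StepTwoGroup ω) : g⁻¹.horizontal = -g.horizontal := rfl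

@[simp] lemma inv_vertical (g : StepTwoGroup ω) :
    g⁻¹.vertical = -g.vertical + (1 / 2 : ℝ) • ω g.horizontal g.horizontal := rfl

noncomputable instance : Group (StepTwoGroup ω) :=
  Group.ofLeftAxioms
    (fun g h k => by
      ext
      · simp [add_assoc]
      · simp only [mul_horizontal, mul_vertical, map_add, _root_.add_apply]
        module)
    (fun g => by ext <;> simp)
    (fun g => by ext <;> simp)

/-- The Carnot dilation of ratio `c`, which has weight one on the horizontal layer and weight two
on the vertical one. -/
noncomputable def dilation (c : ℝ) : StepTwoGroup ω →* StepTwoGroup ω where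
  toFun g := ⟨c • g.horizontal, c ^ 2 • g.vertical⟩
  map_one' := by ext <;> simp
  map_mul' g h := by
    ext
    · simp
    · simp only [mul_vertical, map_smul, _root_.smul_apply]
      module

/-- The endpoint of the horizontal one-parameter subgroup with velocity `x`. -/
noncomputable def exp (ω : E →L[ℝ] E →L[ℝ] V) (x : E) : StepTwoGroup ω :=
  ⟨x, (1 / 4 : ℝ) • ω x x⟩

lemma exp_mul_vertical (x : E) (z : V) :
    exp ω x * ⟨0, z⟩ = ⟨x, z + (1 / 4 : ℝ) • ω x x⟩ := by
  ext <;> simp [exp, add_comm]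

lemma exp_commutator (x y : E) :
    exp ω x * exp ω y * exp ω (-x) * exp ω (-y) = ⟨0, (1 / 2 : ℝ) • (ω x y - ω y x)⟩ := by
  ext
  · simp [exp]
  · simp only [exp, mul_horizontal, mul_vertical, map_add, map_neg, _root_.add_apply,
      _root_.neg_apply]
    module

lemma vertical_mul_vertical (z z' : V) :
    (⟨0, z⟩ * ⟨0, z'⟩ : StepTwoGroup ω) = ⟨0, z + z'⟩ := by
  ext <;> simp

end StepTwoGroup

end StepTwoGroup

section Endpoint

variable {E V : Type*} [NormedAddCommGroup E] [NormedSpace ℝ E] [NormedAddCommGroup V]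
  [NormedSpace ℝ V] {ω : E →L[ℝ] E →L[ℝ] V} {S T : ℝ} {h k : ℝ → E}

/-- The endpoint at time `T` of the horizontal path with control `h` issuing from the identity:
the solution of `g' = g * h`, whose horizontal part is the primitive of `h`. -/
noncomputable def endpoint (ω : E →L[ℝ] E →L[ℝ] V) (T : ℝ) (h : ℝ → E) : StepTwoGroup ω where
  horizontal := ∫ t in (0 : ℝ)..T, h t
  vertical := (1 / 2 : ℝ) • ∫ t in (0 : ℝ)..T, ω (∫ s in (0 : ℝ)..t, h s) (h t)

lemma endpoint_congr (hT : 0 ≤ T) (hhk : h =ᵐ[volume.restrict (Ioc 0 T)] k) :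
    endpoint ω T h = endpoint ω T k := by
  have hprim {t : ℝ} (ht : t ∈ Icc 0 T) : ∫ s in (0 : ℝ)..t, h s = ∫ s in (0 : ℝ)..t, k s := by
    rw [intervalIntegral.integral_of_le ht.1, intervalIntegral.integral_of_le ht.1]
    exact integral_congr_ae
      (ae_restrict_of_ae_restrict_of_subset (Ioc_subset_Ioc_right ht.2) hhk)
  ext
  · exact hprim (right_mem_Icc.2 hT)
  · simp only [endpoint, intervalIntegral.integral_of_le hT]
    congr 1
    refine integral_congr_ae ?_
    filter_upwards [hhk, ae_restrict_mem measurableSet_Ioc] with t ht htmem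
    rw [ht, hprim (Ioc_subset_Icc_self htmem)]

lemma endpoint_zero : endpoint ω T 0 = 1 := by
  ext <;> simp [endpoint]

lemma endpoint_const [CompleteSpace E] [CompleteSpace V] (x : E) :
    endpoint ω T (fun _ => x) = StepTwoGroup.exp ω (T • x) := by
  ext
  · simp [endpoint, StepTwoGroup.exp]
  · simp only [endpoint, StepTwoGroup.exp, intervalIntegral.integral_const, sub_zero, map_smul,
      _root_.smul_apply, intervalIntegral.integral_smul_const, integral_id]
    module

lemma endpoint_smul (c : ℝ) :
    endpoint ω T (c • h) = StepTwoGroup.dilation c (endpoint ω T h) := by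
  ext
  · simp [endpoint, StepTwoGroup.dilation]
  · simp only [endpoint, StepTwoGroup.dilation, Pi.smul_apply, intervalIntegral.integral_smul,
      map_smul, _root_.smul_apply, MonoidHom.coe_mk, OneHom.coe_mk]
    module

/-- The function `h` run at `c` times its speed, as a control of the accelerated path. -/
def speedUp (c : ℝ) (h : ℝ → E) : ℝ → E := fun t => c • h (c * t)

lemma speedUp_zero (h : ℝ → E) : speedUp 0 h = 0 := by
  ext t
  simp [speedUp]

lemma speedUp_one (h : ℝ → E) : speedUp 1 h = h := by
  ext t
  simp [speedUp]

lemma integral_speedUp (c : ℝ) (h : ℝ → E) (t : ℝ) :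
    ∫ s in (0 : ℝ)..t, speedUp c h s = ∫ s in (0 : ℝ)..c * t, h s := by
  simp [speedUp, intervalIntegral.integral_smul]

lemma endpoint_speedUp (c : ℝ) : endpoint ω T (speedUp c h) = endpoint ω (c * T) h := by
  ext
  · exact integral_speedUp c h T
  · simp only [endpoint, integral_speedUp]
    rw [← integral_speedUp c fun t => ω (∫ s in (0 : ℝ)..t, h s) (h t)]
    simp [speedUp]

lemma intervalIntegrable_bilin_primitive {a b : ℝ} (ω : E →L[ℝ] E →L[ℝ] V)
    (hh : IntervalIntegrable h volume a b) (hk : IntervalIntegrable k volume a b) :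
    IntervalIntegrable (fun t => ω (∫ s in a..t, h s) (k t)) volume a b := by
  have hprim : ContinuousOn (fun t => ∫ s in a..t, h s) (uIcc a b) :=
    intervalIntegral.continuousOn_primitive_interval
      ((intervalIntegrable_iff' enorm_ne_top).1 hh)
  obtain ⟨C, hC⟩ := isCompact_uIcc.exists_bound_of_continuousOn hprim
  rw [intervalIntegrable_iff] at hk ⊢
  refine ω.integrable_of_bilin_of_bdd_left C
    ((hprim.mono uIoc_subset_uIcc).aestronglyMeasurable measurableSet_uIoc) ?_ hk
  filter_upwards [ae_restrict_mem measurableSet_uIoc] with t ht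
  exact hC t (uIoc_subset_uIcc ht)

/-- Chen's identity in step two. -/
lemma endpoint_add [CompleteSpace E] [CompleteSpace V]
    (hh : ∀ a b, IntervalIntegrable h volume a b) :
    endpoint ω (S + T) h = endpoint ω S h * endpoint ω T (fun t => h (S + t)) := by
  have hshift (a b : ℝ) : IntervalIntegrable (fun t => h (S + t)) volume a b := by
    simpa [add_comm] using (hh (S + a) (S + b)).comp_add_left S
  have hprim (t : ℝ) : ∫ s in (0 : ℝ)..S + t, h s =
      (∫ s in (0 : ℝ)..S, h s) + ∫ s in (0 : ℝ)..t, h (S + s) := by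
    rw [intervalIntegral.integral_comp_add_left h, add_zero,
      intervalIntegral.integral_add_adjacent_intervals (hh _ _) (hh _ _)]
  have hint (b : ℝ) :
      IntervalIntegrable (fun t => ω (∫ s in (0 : ℝ)..t, h s) (h t)) volume 0 b :=
    intervalIntegrable_bilin_primitive ω (hh 0 b) (hh 0 b)
  have htail : ∫ t in S..S + T, ω (∫ s in (0 : ℝ)..t, h s) (h t) =
      ω (∫ s in (0 : ℝ)..S, h s) (∫ t in (0 : ℝ)..T, h (S + t)) +
        ∫ t in (0 : ℝ)..T, ω (∫ s in (0 : ℝ)..t, h (S + s)) (h (S + t)) := by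
    have hconst : IntervalIntegrable (fun t => ω (∫ s in (0 : ℝ)..S, h s) (h (S + t)))
        volume 0 T :=
      ⟨(ω _).integrable_comp (hshift 0 T).1, (ω _).integrable_comp (hshift 0 T).2⟩
    calc
      _ = ∫ t in (0 : ℝ)..T, ω (∫ s in (0 : ℝ)..S + t, h s) (h (S + t)) := by
        rw [intervalIntegral.integral_comp_add_left
          (fun t => ω (∫ s in (0 : ℝ)..t, h s) (h t)), add_zero]
      _ = _ := by
        simp only [hprim, map_add, _root_.add_apply]
        rw [intervalIntegral.integral_add hconst
          (intervalIntegrable_bilin_primitive ω (hshift 0 T) (hshift 0 T)),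
          ContinuousLinearMap.intervalIntegral_comp_comm _ (hshift 0 T)]
  ext
  · exact hprim T
  · simp only [endpoint, StepTwoGroup.mul_vertical]
    rw [← intervalIntegral.integral_add_adjacent_intervals (hint S)
      ((hint S).symm.trans (hint (S + T))), htail]
    module

end Endpoint
section ExtendByZero

variable {α E : Type*} [MeasurableSpace α] [NormedAddCommGroup E] {p : ℝ≥0∞} {μ : Measure α}
  {s : Set α}

/-- The extension by zero of an `Lᵖ` function on `s` to the whole space. -/
noncomputable def extendByZero (hs : MeasurableSet s) (u : Lp E p (μ.restrict s)) : Lp E p μ :=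
  ((memLp_indicator_iff_restrict hs).2 (Lp.memLp u)).toLp (s.indicator u)

lemma coeFn_extendByZero (hs : MeasurableSet s) (u : Lp E p (μ.restrict s)) :
    extendByZero hs u =ᵐ[μ] s.indicator u :=
  MemLp.coeFn_toLp _

lemma extendByZero_ae_eq_restrict (hs : MeasurableSet s) (u : Lp E p (μ.restrict s)) :
    extendByZero hs u =ᵐ[μ.restrict s] u :=
  EventuallyEq.trans (ae_restrict_of_ae (coeFn_extendByZero hs u)) (indicator_ae_eq_restrict hs)

lemma extendByZero_zero (hs : MeasurableSet s) :
    extendByZero hs (0 : Lp E p (μ.restrict s)) = 0 := by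
  refine Lp.ext ((coeFn_extendByZero hs 0).trans (.trans ?_ (Lp.coeFn_zero E p μ).symm))
  simpa using (ae_eq_restrict_iff_indicator_ae_eq hs).1 (Lp.coeFn_zero E p (μ.restrict s))

lemma isometry_extendByZero [Fact (1 ≤ p)] (hs : MeasurableSet s) :
    Isometry (extendByZero hs : Lp E p (μ.restrict s) → Lp E p μ) := fun u v => by
  rw [extendByZero, extendByZero, Lp.edist_toLp_toLp, ← indicator_sub',
    eLpNorm_indicator_eq_eLpNorm_restrict hs, Lp.edist_def]

end ExtendByZero

section LpContinuity

variable {X α E : Type*} [TopologicalSpace X] [TopologicalSpace α] [MeasurableSpace α]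
  [NormedAddCommGroup E] {p : ℝ≥0∞} [Fact (1 ≤ p)] {μ : Measure α} [IsFiniteMeasure μ] {K : Set α}

lemma continuous_of_coeFn_ae_eq_of_isCompact (hK : IsCompact K) (hμK : ∀ᵐ t ∂μ, t ∈ K)
    {f : X → Lp E p μ} {F : X → α → E} (hF : Continuous ↿F) (hfF : ∀ x, f x =ᵐ[μ] F x) :
    Continuous f := by
  refine continuous_iff_continuousAt.2 fun x₀ => Metric.tendsto_nhds.2 fun ε hε => ?_
  obtain ⟨δ, hδ, hmδ⟩ := exists_pos_mul_lt hε (measureUnivNNReal μ ^ p.toReal⁻¹ : ℝ)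
  have hclose : ∀ᶠ x in 𝓝 x₀, ∀ t ∈ K, dist (F x t) (F x₀ t) < δ := by
    refine hK.eventually_forall_of_forall_eventually fun t _ => ?_
    have hdist : Continuous fun z : X × α => dist (F z.1 z.2) (F x₀ z.2) :=
      hF.dist (hF.comp (continuous_const.prodMk continuous_snd))
    exact hdist.continuousAt.eventually_lt continuousAt_const (by simpa using hδ)
  filter_upwards [hclose] with x hx
  rw [dist_eq_norm]
  refine (Lp.norm_le_of_ae_bound hδ.le ?_).trans_lt hmδ
  filter_upwards [Lp.coeFn_sub (f x) (f x₀), hfF x, hfF x₀, hμK] with t hsub hxt hx₀t ht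
  rw [hsub, Pi.sub_apply, hxt, hx₀t, ← dist_eq_norm]
  exact (hx t ht).le

end LpContinuity

section Controls

variable {E V : Type*} [NormedAddCommGroup E] {p : ℝ≥0∞} {S T : ℝ}

/-- The space of `Lᵖ` controls on the time interval `(0, T]`; an admissible path from the identity
is encoded by its control. -/
noncomputable abbrev ControlSpace (E : Type*) [NormedAddCommGroup E] (p : ℝ≥0∞) (T : ℝ) :=
  Lp E p (volume.restrict (Ioc 0 T))

lemma extendByZero_const_add_ae_eq_zero (u : ControlSpace E p T) :
    (fun t => extendByZero measurableSet_Ioc u (T + t)) =ᵐ[volume.restrict (Ioc 0 S)] 0 := by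
  have hshift := (measurePreserving_add_left volume T).quasiMeasurePreserving.ae_eq_comp
    (coeFn_extendByZero measurableSet_Ioc u)
  filter_upwards [ae_restrict_of_ae hshift, ae_restrict_mem measurableSet_Ioc] with t ht htmem
  rw [Function.comp_apply, Function.comp_apply] at ht
  rw [ht, indicator_of_notMem (by simp [htmem.1]), Pi.zero_apply]

lemma intervalIntegrable_coeFn [Fact (1 ≤ p)] (h : Lp E p (volume : Measure ℝ)) (a b : ℝ) :
    IntervalIntegrable h volume a b :=
  (((Lp.memLp h).locallyIntegrable Fact.out).integrableOn_isCompact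
    isCompact_uIcc).intervalIntegrable

lemma intervalIntegrable_coeFn_control [Fact (1 ≤ p)] (hT : 0 ≤ T) (u : ControlSpace E p T) :
    IntervalIntegrable u volume 0 T :=
  (intervalIntegrable_iff_integrableOn_Ioc_of_le hT).2 ((Lp.memLp u).integrable Fact.out)

lemma eLpNorm_comp_mul_left_le {c : ℝ} (hc : 1 ≤ c) {h : ℝ → E} (hh : AEStronglyMeasurable h) :
    eLpNorm (h ∘ (c * ·)) p ≤ eLpNorm h p := by
  have hc₀ : 0 < c := one_pos.trans_le hc
  have hle : Measure.map (c * ·) volume ≤ (volume : Measure ℝ) := by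
    rw [Real.map_volume_mul_left hc₀.ne', abs_of_pos (inv_pos.2 hc₀)]
    exact Measure.le_iff.2 fun s _ =>
      mul_le_of_le_one_left' (ENNReal.ofReal_le_one.2 (inv_le_one_of_one_le₀ hc))
  rw [← eLpNorm_map_measure (hh.mono_measure hle) (by fun_prop)]
  exact eLpNorm_mono_measure _ hle

/-- Translation of a function on the line by `T`. -/
noncomputable def delay (T : ℝ) : Lp E p (volume : Measure ℝ) →+ Lp E p (volume : Measure ℝ) :=
  Lp.compMeasurePreserving (· - T) (measurePreserving_sub_right volume T)

lemma coeFn_delay (T : ℝ) (h : Lp E p (volume : Measure ℝ)) :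
    delay T h =ᵐ[volume] fun t => h (t - T) :=
  Lp.coeFn_compMeasurePreserving h _

variable [NormedSpace ℝ E] [NormedAddCommGroup V] [NormedSpace ℝ V] {ω : E →L[ℝ] E →L[ℝ] V}

lemma speedUp_ae_eq {h k : ℝ → E} (c : ℝ) (hhk : h =ᵐ[volume] k) :
    speedUp c h =ᵐ[volume] speedUp c k := by
  rcases eq_or_ne c 0 with rfl | hc
  · simp only [speedUp_zero, EventuallyEq.rfl]
  · filter_upwards [(Measure.quasiMeasurePreserving_smul volume hc).ae hhk] with t ht
    exact congrArg (c • ·) ht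

lemma memLp_speedUp (c : ℝ) {h : ℝ → E} (hh : MemLp h p) : MemLp (speedUp c h) p := by
  rcases eq_or_ne c 0 with rfl | hc
  · simp only [speedUp_zero, MemLp.zero]
  · have hmap : MemLp h p (Measure.map (c * ·) volume) := by
      rw [Real.map_volume_mul_left hc]
      exact hh.smul_measure ENNReal.ofReal_ne_top
    exact (hmap.comp_of_map (by fun_prop)).const_smul c

lemma eLpNorm_speedUp_le {c : ℝ} (hc : 1 ≤ c) {h : ℝ → E} (hh : AEStronglyMeasurable h) :
    eLpNorm (speedUp c h) p ≤ ENNReal.ofReal c * eLpNorm h p := by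
  have hsmul : eLpNorm (speedUp c h) p = ‖c‖ₑ * eLpNorm (h ∘ (c * ·)) p :=
    eLpNorm_const_smul c (h ∘ (c * ·)) p volume
  rw [hsmul, Real.enorm_of_nonneg (by linarith)]
  exact mul_le_mul_right (eLpNorm_comp_mul_left_le hc hh) _

/-- The control on `(0, T]` obtained by running a control on the whole line at `c` times its
speed. -/
noncomputable def accelerate (T c : ℝ) (h : Lp E p (volume : Measure ℝ)) : ControlSpace E p T :=
  ((memLp_speedUp c (Lp.memLp h)).restrict (Ioc 0 T)).toLp (speedUp c h)

lemma coeFn_accelerate (T c : ℝ) (h : Lp E p (volume : Measure ℝ)) :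
    accelerate T c h =ᵐ[volume.restrict (Ioc 0 T)] speedUp c h :=
  MemLp.coeFn_toLp _

lemma endpoint_accelerate (hT : 0 ≤ T) (c : ℝ) (h : Lp E p (volume : Measure ℝ)) :
    endpoint ω T (accelerate T c h) = endpoint ω (c * T) h :=
  (endpoint_congr hT (coeFn_accelerate T c h)).trans (endpoint_speedUp c)

lemma accelerate_one_extendByZero (u : ControlSpace E p T) :
    accelerate T 1 (extendByZero measurableSet_Ioc u) = u := by
  refine Lp.ext ((coeFn_accelerate T 1 _).trans ?_)
  rw [speedUp_one]
  exact extendByZero_ae_eq_restrict measurableSet_Ioc u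

lemma endpoint_extendByZero [Fact (1 ≤ p)] [CompleteSpace E] [CompleteSpace V] (hT : 0 ≤ T)
    (hTS : T ≤ S) (u : ControlSpace E p T) :
    endpoint ω S (extendByZero measurableSet_Ioc u) = endpoint ω T u := by
  rw [← add_sub_cancel T S, endpoint_add (intervalIntegrable_coeFn _),
    endpoint_congr hT (extendByZero_ae_eq_restrict measurableSet_Ioc u),
    endpoint_congr (sub_nonneg.2 hTS) (extendByZero_const_add_ae_eq_zero u), endpoint_zero,
    mul_one]

lemma lipschitzWith_accelerate [Fact (1 ≤ p)] {c : ℝ} (hc : 1 ≤ c) :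
    LipschitzWith c.toNNReal
      (accelerate T c : Lp E p (volume : Measure ℝ) → ControlSpace E p T) := fun h k => by
  rw [accelerate, accelerate, Lp.edist_toLp_toLp, Lp.edist_def]
  have hsub : speedUp c h - speedUp c k = speedUp c (⇑h - ⇑k) := by
    ext t
    simp [speedUp, smul_sub]
  rw [hsub]
  exact (eLpNorm_mono_measure _ Measure.restrict_le_self).trans
    (eLpNorm_speedUp_le hc ((Lp.aestronglyMeasurable h).sub (Lp.aestronglyMeasurable k)))

lemma continuous_accelerate_of_continuous [Fact (1 ≤ p)] {f : ℝ → E} (hf : Continuous f)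
    {h : Lp E p (volume : Measure ℝ)} (hfh : h =ᵐ[volume] f) :
    Continuous fun c => accelerate T c h := by
  refine continuous_of_coeFn_ae_eq_of_isCompact (K := Icc 0 T) (F := fun c => speedUp c f)
    isCompact_Icc ((ae_restrict_mem measurableSet_Ioc).mono fun _ ht => Ioc_subset_Icc_self ht)
    ?_ fun c => (coeFn_accelerate T c h).trans ?_
  · simp only [Function.HasUncurry.uncurry, speedUp, id]
    fun_prop
  · exact ae_restrict_of_ae (speedUp_ae_eq c hfh)

lemma continuous_accelerate [Fact (1 ≤ p)] (hp : p ≠ ∞) :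
    Continuous fun q : I × Lp E p (volume : Measure ℝ) => accelerate T (1 + q.1) q.2 := by
  refine continuous_prod_of_dense_continuous_lipschitzWith' _ 2
    (Lp.boundedContinuousFunction_dense E volume hp) (fun s => ?_) fun h hh => ?_
  · have hs : Real.toNNReal (1 + s) ≤ 2 :=
      Real.toNNReal_le_iff_le_coe.2 (by rw [NNReal.coe_ofNat]; linarith [s.2.2])
    have hlip := lipschitzWith_accelerate (E := E) (p := p) (T := T) (c := 1 + s)
      (by linarith [s.2.1])
    exact hlip.weaken hs
  · obtain ⟨f, hf⟩ := Lp.mem_boundedContinuousFunction_iff.1 hh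
    have hfh : h =ᵐ[volume] f := by
      rw [← hf]
      exact ContinuousMap.coeFn_toAEEqFun _ _
    exact (continuous_accelerate_of_continuous f.continuous hfh).comp (by fun_prop)

/-- Both controls are run one after the other at double speed on `(0, T]`: this is the control of
the path of `u` followed by the left translate of the path of `v`. -/
noncomputable def concat (u v : ControlSpace E p T) : ControlSpace E p T :=
  accelerate T 2 (extendByZero measurableSet_Ioc u + delay T (extendByZero measurableSet_Ioc v))

lemma concat_zero (u : ControlSpace E p T) :
    concat u 0 = accelerate T (1 + 1) (extendByZero measurableSet_Ioc u) := by
  rw [concat, extendByZero_zero, map_zero, add_zero, one_add_one_eq_two]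

lemma continuous_concat [Fact (1 ≤ p)] {X : Type*} [TopologicalSpace X]
    {u v : X → ControlSpace E p T} (hu : Continuous u) (hv : Continuous v) :
    Continuous fun x => concat (u x) (v x) := by
  have hext := (isometry_extendByZero (E := E) (p := p) (μ := volume)
    (measurableSet_Ioc (a := 0) (b := T))).continuous
  have hdelay : Continuous (delay T : Lp E p (volume : Measure ℝ) → Lp E p volume) :=
    (Lp.isometry_compMeasurePreserving (measurePreserving_sub_right volume T)).continuous
  exact (lipschitzWith_accelerate one_le_two).continuous.comp
    ((hext.comp hu).add (hdelay.comp (hext.comp hv)))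

lemma endpoint_concat [Fact (1 ≤ p)] [CompleteSpace E] [CompleteSpace V] (hT : 0 ≤ T)
    (u v : ControlSpace E p T) :
    endpoint ω T (concat u v) = endpoint ω T u * endpoint ω T v := by
  set u₀ := extendByZero measurableSet_Ioc u
  set v₀ := extendByZero measurableSet_Ioc v
  have hhead : ⇑(u₀ + delay T v₀) =ᵐ[volume.restrict (Ioc 0 T)] u := by
    have hv₀ := (measurePreserving_sub_right volume T).quasiMeasurePreserving.ae_eq_comp
      (coeFn_extendByZero measurableSet_Ioc v)
    filter_upwards [ae_restrict_of_ae (Lp.coeFn_add u₀ (delay T v₀)),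
      ae_restrict_of_ae (coeFn_delay T v₀), ae_restrict_of_ae hv₀,
      extendByZero_ae_eq_restrict measurableSet_Ioc u, ae_restrict_mem measurableSet_Ioc]
      with t hadd hdelay hv hu ht
    rw [hadd, Pi.add_apply, hu, hdelay]
    simpa [ht.2] using hv
  have htail : (fun t => (u₀ + delay T v₀) (T + t)) =ᵐ[volume.restrict (Ioc 0 T)] v := by
    have hshift := (measurePreserving_add_left volume T).quasiMeasurePreserving
    filter_upwards [ae_restrict_of_ae (hshift.ae_eq_comp (Lp.coeFn_add u₀ (delay T v₀))),
      ae_restrict_of_ae (hshift.ae_eq_comp (coeFn_delay T v₀)),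
      extendByZero_const_add_ae_eq_zero u, extendByZero_ae_eq_restrict measurableSet_Ioc v]
      with t hadd hdelay hu hv
    simp only [Function.comp_apply, Pi.add_apply, add_sub_cancel_left] at hadd hdelay
    rw [hadd, hu, hdelay, hv, Pi.zero_apply, zero_add]
  rw [concat, endpoint_accelerate hT, two_mul, endpoint_add (intervalIntegrable_coeFn _),
    endpoint_congr hT hhead, endpoint_congr hT htail]

end Controls

section PathSpace

variable {E V : Type*} [NormedAddCommGroup E] [NormedSpace ℝ E] [NormedAddCommGroup V]
  [NormedSpace ℝ V] {ω : E →L[ℝ] E →L[ℝ] V} {p : ℝ≥0∞} {T : ℝ} {g : StepTwoGroup ω}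

/-- The space `Ω_g` of admissible paths on `[0, T]` from the identity to `g`, encoded by their
`Lᵖ` controls and carrying the `Lᵖ` topology. -/
abbrev PathSpace (ω : E →L[ℝ] E →L[ℝ] V) (p : ℝ≥0∞) (T : ℝ) (g : StepTwoGroup ω) :=
  {u : ControlSpace E p T // endpoint ω T u = g}

/-- The control that runs `u` at speed `1 + s` and then rests at its endpoint. -/
noncomputable def dwell (s : ℝ) (u : ControlSpace E p T) : ControlSpace E p T :=
  accelerate T (1 + s) (extendByZero measurableSet_Ioc u)

lemma dwell_zero (u : ControlSpace E p T) : dwell 0 u = u := by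
  rw [dwell, add_zero, accelerate_one_extendByZero]

lemma dwell_one (u : ControlSpace E p T) : dwell 1 u = concat u 0 :=
  (concat_zero u).symm

lemma endpoint_smul_coeFn (hT : 0 ≤ T) (c : ℝ) (u : ControlSpace E p T) :
    endpoint ω T ⇑(c • u) = StepTwoGroup.dilation c (endpoint ω T u) :=
  (endpoint_congr hT (Lp.coeFn_smul c u)).trans (endpoint_smul c)

lemma endpoint_zero_coeFn (hT : 0 ≤ T) : endpoint ω T ⇑(0 : ControlSpace E p T) = 1 :=
  (endpoint_congr hT (Lp.coeFn_zero E p _)).trans endpoint_zero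

lemma endpoint_zero_mul_endpoint_zero (hT : 0 ≤ T) :
    endpoint ω T ⇑(0 : ControlSpace E p T) * endpoint ω T ⇑(0 : ControlSpace E p T) = 1 := by
  rw [endpoint_zero_coeFn hT, mul_one]

variable [Fact (1 ≤ p)]

lemma continuous_dwell (hp : p ≠ ∞) {X : Type*} [TopologicalSpace X] {s : X → I}
    {u : X → ControlSpace E p T} (hs : Continuous s) (hu : Continuous u) :
    Continuous fun x => dwell (s x : ℝ) (u x) :=
  (continuous_accelerate hp).comp
    (hs.prodMk ((isometry_extendByZero measurableSet_Ioc).continuous.comp hu))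

variable [CompleteSpace E] [CompleteSpace V]

lemma endpoint_dwell (hT : 0 ≤ T) {s : ℝ} (hs : 0 ≤ s) (u : ControlSpace E p T) :
    endpoint ω T (dwell s u) = endpoint ω T u := by
  rw [dwell, endpoint_accelerate hT, endpoint_extendByZero hT (by nlinarith)]

lemma endpoint_concat_concat (hT : 0 ≤ T) {γ' γ : ControlSpace E p T}
    (hloop : endpoint ω T γ' * endpoint ω T γ = 1) (u : ControlSpace E p T) :
    endpoint ω T (concat (concat u γ') γ) = endpoint ω T u := by
  rw [endpoint_concat hT, endpoint_concat hT, mul_assoc, hloop, mul_one]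

/-- The self-map of `Ω_g` that appends to each path the controls `γ'` and `γ`, which together form
a loop. -/
noncomputable def detour (hT : 0 ≤ T) (γ' γ : ControlSpace E p T)
    (hloop : endpoint ω T γ' * endpoint ω T γ = 1) : C(PathSpace ω p T g, PathSpace ω p T g) where
  toFun u := ⟨concat (concat u.1 γ') γ, (endpoint_concat_concat hT hloop u.1).trans u.2⟩
  continuous_toFun :=
    (continuous_concat (continuous_concat continuous_subtype_val continuous_const)
      continuous_const).subtype_mk _

lemma id_homotopic_detour_zero (hp : p ≠ ∞) (hT : 0 ≤ T) :
    (ContinuousMap.id (PathSpace ω p T g)).Homotopic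
      (detour hT 0 0 (endpoint_zero_mul_endpoint_zero hT)) := by
  have hval : Continuous fun q : I × PathSpace ω p T g => q.2.1 := by fun_prop
  have hcont := continuous_dwell hp continuous_fst (continuous_dwell hp continuous_fst hval)
  have hend (q : I × PathSpace ω p T g) :
      endpoint ω T (dwell (q.1 : ℝ) (dwell (q.1 : ℝ) q.2.1)) = g := by
    rw [endpoint_dwell hT q.1.2.1, endpoint_dwell hT q.1.2.1, q.2.2]
  exact ⟨{
    toFun q := ⟨dwell (q.1 : ℝ) (dwell (q.1 : ℝ) q.2.1), hend q⟩
    continuous_toFun := hcont.subtype_mk _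
    map_zero_left u := Subtype.ext (by simp [dwell_zero])
    map_one_left u := Subtype.ext (by simp [dwell_one, detour]) }⟩

lemma detour_zero_homotopic_detour (hT : 0 ≤ T) {γ' γ : ControlSpace E p T}
    (hloop : endpoint ω T γ' * endpoint ω T γ = 1) :
    (detour (g := g) hT 0 0 (endpoint_zero_mul_endpoint_zero hT)).Homotopic
      (detour hT γ' γ hloop) := by
  -- Dilations are homomorphisms, so scaling the two controls keeps their concatenation a loop.
  have hscale (s : ℝ) : endpoint ω T ⇑(s • γ') * endpoint ω T ⇑(s • γ) = 1 := by
    rw [endpoint_smul_coeFn hT, endpoint_smul_coeFn hT, ← map_mul, hloop, map_one]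
  have hval : Continuous fun q : I × PathSpace ω p T g => q.2.1 := by fun_prop
  have hsmul (v : ControlSpace E p T) :
      Continuous fun q : I × PathSpace ω p T g => (q.1 : ℝ) • v := by fun_prop
  have hcont := continuous_concat (continuous_concat hval (hsmul γ')) (hsmul γ)
  exact ⟨{
    toFun q := detour hT ((q.1 : ℝ) • γ') ((q.1 : ℝ) • γ) (hscale q.1) q.2
    continuous_toFun := hcont.subtype_mk _
    map_zero_left u := by simp
    map_one_left u := by simp }⟩

lemma detour_nullhomotopic (hT : 0 ≤ T) {γ' γ : ControlSpace E p T}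
    (hγ : endpoint ω T γ = g) (hloop : endpoint ω T γ' * endpoint ω T γ = 1) :
    (detour (g := g) hT γ' γ hloop).Nullhomotopic := by
  -- The path `u` followed by `γ'` is a loop at the identity, which dilations shrink to a point.
  have hscale (s : ℝ) (u : PathSpace ω p T g) :
      endpoint ω T (concat (s • concat u.1 γ') γ) = g := by
    rw [endpoint_concat hT, endpoint_smul_coeFn hT, endpoint_concat hT, u.2, ← hγ,
      mul_eq_one_iff_eq_inv.1 hloop, mul_inv_cancel, map_one, one_mul]
  have hval : Continuous fun q : I × PathSpace ω p T g => q.2.1 := by fun_prop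
  have hsub : Continuous fun q : I × PathSpace ω p T g => (1 - q.1 : ℝ) := by fun_prop
  have hcont := continuous_concat (hsub.smul (continuous_concat hval (continuous_const (y := γ'))))
    (continuous_const (y := γ))
  refine ⟨⟨concat 0 γ, by
    rw [endpoint_concat hT, endpoint_zero_coeFn hT, one_mul, hγ]⟩, ⟨{
    toFun q := ⟨concat ((1 - q.1 : ℝ) • concat q.2.1 γ') γ, hscale _ q.2⟩
    continuous_toFun := hcont.subtype_mk _
    map_zero_left u := Subtype.ext (by simp [detour])
    map_one_left u := Subtype.ext (by simp) }⟩⟩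

lemma contractibleSpace_pathSpace_of_surjective (hp : p ≠ ∞) (hT : 0 ≤ T)
    (hsurj : Function.Surjective fun u : ControlSpace E p T => endpoint ω T u)
    (g : StepTwoGroup ω) : ContractibleSpace (PathSpace ω p T g) := by
  obtain ⟨γ, hγ⟩ := hsurj g
  obtain ⟨γ', hγ'⟩ := hsurj g⁻¹
  have hloop : endpoint ω T γ' * endpoint ω T γ = 1 := by
    simp only [hγ, hγ', inv_mul_cancel]
  obtain ⟨u₀, hu₀⟩ := detour_nullhomotopic hT hγ hloop
  exact (contractible_iff_id_nullhomotopic _).2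
    ⟨u₀, ((id_homotopic_detour_zero hp hT).trans
      (detour_zero_homotopic_detour hT hloop)).trans hu₀⟩

end PathSpace

section Surjectivity

variable {E V : Type*} [NormedAddCommGroup E] [NormedSpace ℝ E] [NormedAddCommGroup V]
  [NormedSpace ℝ V] [CompleteSpace E] [CompleteSpace V] {ω : E →L[ℝ] E →L[ℝ] V} {p : ℝ≥0∞}
  [Fact (1 ≤ p)] {T : ℝ}

/-- The endpoints at time `T` of admissible paths, as a subsemigroup of the group. -/
def reachable (ω : E →L[ℝ] E →L[ℝ] V) (p : ℝ≥0∞) [Fact (1 ≤ p)] (hT : 0 ≤ T) :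
    Subsemigroup (StepTwoGroup ω) where
  carrier := range fun u : ControlSpace E p T => endpoint ω T u
  mul_mem' := by
    rintro _ _ ⟨u, rfl⟩ ⟨v, rfl⟩
    exact ⟨concat u v, endpoint_concat hT u v⟩

lemma exp_mem_reachable (hT : 0 < T) (x : E) :
    StepTwoGroup.exp ω x ∈ reachable ω p hT.le := by
  refine ⟨Lp.const p _ (T⁻¹ • x), ?_⟩
  calc
    endpoint ω T (Lp.const p (volume.restrict (Ioc 0 T)) (T⁻¹ • x)) =
        endpoint ω T fun _ => T⁻¹ • x :=
      endpoint_congr hT.le (Lp.coeFn_const p _ _)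
    _ = .exp ω x := by rw [endpoint_const, smul_inv_smul₀ hT.ne']

lemma vertical_mem_reachable (hT : 0 < T)
    (hspan : Submodule.span ℝ (range fun q : E × E => ω q.1 q.2 - ω q.2 q.1) = ⊤) (z : V) :
    (⟨0, z⟩ : StepTwoGroup ω) ∈ reachable ω p hT.le := by
  have hexp (x : E) := exp_mem_reachable (ω := ω) (p := p) hT x
  have hz : z ∈ Submodule.span ℝ (range fun q : E × E => ω q.1 q.2 - ω q.2 q.1) :=
    hspan ▸ Submodule.mem_top
  induction hz using Submodule.closure_induction with
  | zero => simpa [StepTwoGroup.exp] using hexp 0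
  | add z z' _ _ hz hz' =>
    rw [← StepTwoGroup.vertical_mul_vertical]
    exact mul_mem hz hz'
  | smul_mem r z hz =>
    obtain ⟨⟨x, y⟩, rfl⟩ := hz
    have hcomm : (⟨0, r • (ω x y - ω y x)⟩ : StepTwoGroup ω) =
        .exp ω ((2 * r) • x) * .exp ω y * .exp ω (-((2 * r) • x)) * .exp ω (-y) := by
      rw [StepTwoGroup.exp_commutator]
      ext
      · rfl
      · simp only [map_smul, _root_.smul_apply]
        module
    rw [hcomm]
    exact mul_mem (mul_mem (mul_mem (hexp _) (hexp _)) (hexp _)) (hexp _)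

lemma surjective_endpoint (hT : 0 < T)
    (hspan : Submodule.span ℝ (range fun q : E × E => ω q.1 q.2 - ω q.2 q.1) = ⊤) :
    Function.Surjective fun u : ControlSpace E p T => endpoint ω T u := by
  rintro ⟨x, z⟩
  have hmem := mul_mem (exp_mem_reachable (ω := ω) (p := p) hT x)
    (vertical_mem_reachable hT hspan (z - (1 / 4 : ℝ) • ω x x))
  rwa [StepTwoGroup.exp_mul_vertical, sub_add_cancel] at hmem

end Surjectivity

section General

variable {E V : Type*} [NormedAddCommGroup E] [NormedSpace ℝ E] [CompleteSpace E]
  [NormedAddCommGroup V] [NormedSpace ℝ V] [CompleteSpace V]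

theorem stmt_15_general (ω : E →L[ℝ] E →L[ℝ] V)
    (hspan : Submodule.span ℝ (range fun q : E × E => ω q.1 q.2 - ω q.2 q.1) = ⊤)
    {p : ℝ≥0∞} [Fact (1 ≤ p)] (hp : p ≠ ∞) {T : ℝ} (hT : 0 < T)
    (F : Lp E p (volume.restrict (Ioc 0 T)) → E × V)
    (hF : F = fun u => (∫ t in (0 : ℝ)..T, u t,
      (1 / 2 : ℝ) • ∫ t in (0 : ℝ)..T, ω (∫ s in (0 : ℝ)..t, u s) (u t))) :
    (∀ p₁ p₂ : E × V, Nonempty (ContinuousMap.HomotopyEquiv {u // F u = p₁} {u // F u = p₂})) ∧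
      ∀ q : E × V, ContractibleSpace {u // F u = q} := by
  have hfiber (q : E × V) : ContractibleSpace {u // F u = q} := by
    have hiff (u : ControlSpace E p T) : F u = q ↔ endpoint ω T u = ⟨q.1, q.2⟩ := by
      simp [hF, endpoint, StepTwoGroup.ext_iff, Prod.ext_iff]
    rw [show (fun u => F u = q) = fun u : ControlSpace E p T => endpoint ω T u = ⟨q.1, q.2⟩ from
      funext fun u => propext (hiff u)]
    exact contractibleSpace_pathSpace_of_surjective hp hT.le (surjective_endpoint hT hspan) _
  exact ⟨fun p₁ p₂ => ⟨(ContractibleSpace.hequiv _ _).some⟩, hfiber⟩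

end General

section MatrixForm

variable {m ι : Type*} [Fintype m]

/-- The vector-valued bilinear form whose component `i` has matrix `A i`: the bracket of the Carnot
group in coordinates. -/
noncomputable def matrixForm (A : ι → Matrix m m ℝ) : (m → ℝ) →L[ℝ] (m → ℝ) →L[ℝ] (ι → ℝ) :=
  (LinearMap.mk₂ ℝ (fun x y i => x ⬝ᵥ A i *ᵥ y)
    (fun _ _ _ => funext fun _ => add_dotProduct _ _ _)
    (fun _ _ _ => funext fun _ => smul_dotProduct _ _ _)
    (fun _ _ _ => funext fun _ => by simp [mulVec_add])
    (fun _ _ _ => funext fun _ => by simp [mulVec_smul])).toContinuousBilinearMap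

lemma matrixForm_apply (A : ι → Matrix m m ℝ) (x y : m → ℝ) (i : ι) :
    matrixForm A x y i = x ⬝ᵥ A i *ᵥ y := rfl

lemma matrixForm_swap {A : ι → Matrix m m ℝ} (hskew : ∀ i, (A i)ᵀ = -A i) (x y : m → ℝ) :
    matrixForm A y x = -matrixForm A x y := by
  ext i
  rw [Pi.neg_apply, matrixForm_apply, matrixForm_apply, dotProduct_comm, ← vecMul_transpose, hskew,
    vecMul_neg, neg_dotProduct, dotProduct_mulVec]

lemma span_range_matrixForm [Finite ι] {A : ι → Matrix m m ℝ} (hind : LinearIndependent ℝ A) :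
    Submodule.span ℝ (range fun q : (m → ℝ) × (m → ℝ) => matrixForm A q.1 q.2) = ⊤ := by
  classical
  have hentries : LinearIndependent ℝ fun i (q : m × m) => A i q.1 q.2 :=
    hind.map' (LinearEquiv.curry ℝ ℝ m m).symm.toLinearMap (LinearEquiv.ker _)
  rw [eq_top_iff, ← span_flip_eq_top_iff_linearIndependent.2 hentries]
  refine Submodule.span_mono ?_
  rintro _ ⟨⟨a, b⟩, rfl⟩
  refine ⟨(Pi.single a 1, Pi.single b 1), ?_⟩
  ext i
  simp [matrixForm_apply, flip]

lemma span_range_matrixForm_sub_swap [Finite ι] {A : ι → Matrix m m ℝ}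
    (hskew : ∀ i, (A i)ᵀ = -A i) (hind : LinearIndependent ℝ A) :
    Submodule.span ℝ (range fun q : (m → ℝ) × (m → ℝ) =>
      matrixForm A q.1 q.2 - matrixForm A q.2 q.1) = ⊤ := by
  rw [eq_top_iff, ← span_range_matrixForm hind]
  refine Submodule.span_mono ?_
  rintro _ ⟨⟨x, y⟩, rfl⟩
  refine ⟨((1 / 2 : ℝ) • x, y), ?_⟩
  simp only [matrixForm_swap hskew ((1 / 2 : ℝ) • x) y, map_smul, _root_.smul_apply]
  module

lemma integral_matrixForm_apply [Fintype ι] (A : ι → Matrix m m ℝ) {h : ℝ → m → ℝ} {a b : ℝ}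
    (hh : IntervalIntegrable h volume a b) (i : ι) :
    (∫ t in a..b, matrixForm A (∫ s in a..t, h s) (h t)) i =
      ∫ t in a..b, (∫ s in a..t, h s) ⬝ᵥ A i *ᵥ h t :=
  ((ContinuousLinearMap.proj (R := ℝ) (φ := fun _ : ι => ℝ) i).intervalIntegral_comp_comm
    (intervalIntegrable_bilin_primitive (matrixForm A) hh hh)).symm

end MatrixForm

/-- The admissible-path spaces of a step-two Carnot group: the group is `ℝ^d ⊕ ℝ^l` with
Carnot structure given by linearly independent skew-symmetric matrices `A₁,…,A_l`; admissible
paths starting at the identity are identified with their controls `u ∈ L²([0,2π], ℝ^d)`, and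
the endpoint map is `F(u) = (∫₀^{2π} u, (1/2)∫₀^{2π} ⟨∫₀^t u, Aᵢ u(t)⟩ dt)`. Then for any two
points `p₁, p₂` the spaces `Ω_{p₁} = F⁻¹(p₁)` and `Ω_{p₂} = F⁻¹(p₂)` (with the `L²` topology)
are homotopy equivalent, and every `Ω_p` is contractible. -/
theorem stmt_15 (d l : ℕ) (A : Fin l → Matrix (Fin d) (Fin d) ℝ)
    (hskew : ∀ i, (A i)ᵀ = -(A i)) (hind : LinearIndependent ℝ A) :
    ∀ F : (Lp (Fin d → ℝ) 2 (volume.restrict (Set.Ioc (0 : ℝ) (2 * π)))) →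
        ((Fin d → ℝ) × (Fin l → ℝ)),
      (F = fun u =>
        ((∫ t in (0 : ℝ)..(2 * π), u t),
          fun i => (1 / 2) * ∫ t in (0 : ℝ)..(2 * π),
            (∫ s in (0 : ℝ)..t, u s) ⬝ᵥ (A i).mulVec (u t))) →
      (∀ p₁ p₂ : (Fin d → ℝ) × (Fin l → ℝ),
        Nonempty (ContinuousMap.HomotopyEquiv {u // F u = p₁} {u // F u = p₂})) ∧
      (∀ p : (Fin d → ℝ) × (Fin l → ℝ), ContractibleSpace {u // F u = p}) := by
  rintro F rfl
  have hprim (u : Lp (Fin d → ℝ) 2 (volume.restrict (Ioc 0 (2 * π)))) (i : Fin l) :=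
    integral_matrixForm_apply A (intervalIntegrable_coeFn_control two_pi_pos.le u) i
  exact stmt_15_general (matrixForm A) (span_range_matrixForm_sub_swap hskew hind)
    ENNReal.ofNat_ne_top two_pi_pos _ (funext fun u => Prod.ext rfl
      (funext fun i => congrArg ((1 / 2 : ℝ) * ·) (hprim u i).symm))
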